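/- Let a, m, α > 0 with m ≤ 1. Then the function ξ ↦ μ₁(a,m,α;ξ) is strictly decreasing on ℝ; in particular it attains no minimum, and inf_{ξ∈ℝ} μ₁(a,m,α;ξ) = 1 - α. -/

import Mathlib

open MeasureTheory Set Filter Topology

noncomputable section

/-- `B¹(ℝ₊)`-type regularity on the half line (smooth core):
`u`, `u'` and `t·u` are square integrable on `(0,∞)`. -/
def MemB1p (u : ℝ → ℝ) : Prop :=
  Differentiable ℝ u ∧
  IntegrableOn (fun t => (u t)^2) (Ioi 0) ∧
  IntegrableOn (fun t => (deriv u t)^2) (Ioi 0) ∧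
  IntegrableOn (fun t => t^2 * (u t)^2) (Ioi 0)

/-- The Robin quadratic form `q[γ,ξ]` of `-d²/dt² + (t-ξ)²` on `ℝ₊`. -/
def qRobin (γ ξ : ℝ) (u : ℝ → ℝ) : ℝ :=
  (∫ t in Ioi (0:ℝ), ((deriv u t)^2 + (t - ξ)^2 * (u t)^2)) + γ * (u 0)^2

/-- squared `L²(ℝ₊)` norm. -/
def np (u : ℝ → ℝ) : ℝ := ∫ t in Ioi (0:ℝ), (u t)^2

/-- Lowest Robin eigenvalue `λ₁(γ,ξ)`, defined variationally. -/
def lambda1 (γ ξ : ℝ) : ℝ :=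
  sInf {r : ℝ | ∃ u : ℝ → ℝ, MemB1p u ∧ np u ≠ 0 ∧ r = qRobin γ ξ u / np u}

/-- Lowest Neumann eigenvalue `λ₁^N(ξ)` (Robin with `γ = 0`). -/
def lambda1N (ξ : ℝ) : ℝ := lambda1 0 ξ

/-- Lowest Dirichlet eigenvalue `λ₁^D(ξ)`, defined variationally. -/
def lambda1D (ξ : ℝ) : ℝ :=
  sInf {r : ℝ | ∃ u : ℝ → ℝ, MemB1p u ∧ u 0 = 0 ∧ np u ≠ 0 ∧ r = qRobin 0 ξ u / np u}

/-- The de Gennes constant `Θ₀ = inf_ξ λ₁^N(ξ)`. -/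
def Theta0 : ℝ := sInf (Set.range lambda1N)

/-- `B¹(ℝ)`-type regularity on the whole line (smooth core). -/
def MemB1 (u : ℝ → ℝ) : Prop :=
  Differentiable ℝ u ∧
  Integrable (fun t => (u t)^2) ∧
  Integrable (fun t => (deriv u t)^2) ∧
  Integrable (fun t => t^2 * (u t)^2)

/-- The interface quadratic form `Q[a,m,α;ξ]` on `B¹(ℝ)`. -/
def QI (a m α ξ : ℝ) (u : ℝ → ℝ) : ℝ :=
  (∫ t in Ioi (0:ℝ), ((deriv u t)^2 + (t - ξ)^2 * (u t)^2 - α * (u t)^2)) +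
  ∫ t in Iio (0:ℝ), ((1/m) * ((deriv u t)^2 + (t - ξ)^2 * (u t)^2) + a * α * (u t)^2)

/-- squared `L²(ℝ)` norm. -/
def nR (u : ℝ → ℝ) : ℝ := ∫ t, (u t)^2

/-- Ground state energy `μ₁(a,m,α;ξ)` of the interface operator, defined variationally. -/
def mu1 (a m α ξ : ℝ) : ℝ :=
  sInf {r : ℝ | ∃ u : ℝ → ℝ, MemB1 u ∧ nR u ≠ 0 ∧ r = QI a m α ξ u / nR u}

/-- coefficient of the principal part -/
def pc (m c s : ℝ) : ℝ := if c < s then 1 else 1/m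
/-- potential step -/
def Vc (a α c s : ℝ) : ℝ := if c < s then -α else a*α
/-- translated form with interface at `c` -/
def QS (a m α c : ℝ) (v : ℝ → ℝ) : ℝ :=
  ∫ s, (pc m c s * ((deriv v s)^2 + s^2 * (v s)^2) + Vc a α c s * (v s)^2)

lemma pc_meas (m c : ℝ) : Measurable (pc m c) :=
  Measurable.ite measurableSet_Ioi measurable_const measurable_const

lemma Vc_meas (a α c : ℝ) : Measurable (Vc a α c) :=
  Measurable.ite measurableSet_Ioi measurable_const measurable_const

lemma pc_int {m c : ℝ} {f : ℝ → ℝ} (hf : Integrable f) : Integrable (fun s => pc m c s * f s) := by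
  refine hf.bdd_mul (c := 1 + |1/m|) (pc_meas m c).aestronglyMeasurable (Eventually.of_forall ?_)
  intro s
  simp only [pc, Real.norm_eq_abs]
  split_ifs
  · simp
  · linarith

lemma Vc_int {a α c : ℝ} {f : ℝ → ℝ} (hf : Integrable f) :
    Integrable (fun s => Vc a α c s * f s) := by
  refine hf.bdd_mul (c := |α| + |a*α|) (Vc_meas a α c).aestronglyMeasurable
    (Eventually.of_forall ?_)
  intro s
  simp only [Vc, Real.norm_eq_abs]
  split_ifs
  · rw [abs_neg]; linarith [abs_nonneg (a*α)]
  · linarith [abs_nonneg α]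

lemma prod_int {f g : ℝ → ℝ} (hf : Measurable f) (hg : Measurable g)
    (hf2 : Integrable (fun s => (f s)^2)) (hg2 : Integrable (fun s => (g s)^2)) :
    Integrable (fun s => f s * g s) := by
  refine (hf2.add hg2).mono' (hf.mul hg).aestronglyMeasurable (Eventually.of_forall ?_)
  intro s
  simp only [Real.norm_eq_abs, Pi.add_apply]
  rw [abs_le]
  constructor <;> nlinarith [sq_nonneg (f s + g s), sq_nonneg (f s - g s), sq_nonneg (f s), sq_nonneg (g s)]

lemma MemB1.meas {u : ℝ → ℝ} (h : MemB1 u) : Measurable u := h.1.continuous.measurable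

lemma MemB1.sint {u : ℝ → ℝ} (h : MemB1 u) : Integrable (fun s => (s * u s)^2) := by
  have := h.2.2.2
  simpa only [mul_pow] using this

lemma MemB1.smeas {u : ℝ → ℝ} (h : MemB1 u) : Measurable (fun s => s * u s) :=
  measurable_id.mul h.meas

lemma MemB1.uu {u v : ℝ → ℝ} (h : MemB1 u) (k : MemB1 v) : Integrable (fun s => u s * v s) :=
  prod_int h.meas k.meas h.2.1 k.2.1

lemma MemB1.dd {u v : ℝ → ℝ} (h : MemB1 u) (k : MemB1 v) :
    Integrable (fun s => deriv u s * deriv v s) :=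
  prod_int (measurable_deriv _) (measurable_deriv _) h.2.2.1 k.2.2.1

lemma MemB1.ss {u v : ℝ → ℝ} (h : MemB1 u) (k : MemB1 v) :
    Integrable (fun s => s^2 * (u s * v s)) := by
  refine (prod_int h.smeas k.smeas h.sint k.sint).congr (Eventually.of_forall fun s => ?_)
  simp only; ring

lemma MemB1.ud {u v : ℝ → ℝ} (h : MemB1 u) (k : MemB1 v) :
    Integrable (fun s => u s * deriv v s) :=
  prod_int h.meas (measurable_deriv _) h.2.1 k.2.2.1

lemma QS_integrable {a m α c : ℝ} {v : ℝ → ℝ} (h : MemB1 v) :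
    Integrable (fun s => pc m c s * ((deriv v s)^2 + s^2 * (v s)^2) + Vc a α c s * (v s)^2) :=
  (pc_int (h.2.2.1.add h.2.2.2)).add (Vc_int h.2.1)

lemma MemB1.shift {u : ℝ → ℝ} (h : MemB1 u) (ξ : ℝ) : MemB1 (fun s => u (s + ξ)) := by
  have hd : ∀ s, deriv (fun s => u (s + ξ)) s = deriv u (s + ξ) := fun s =>
    deriv_comp_add_const u ξ s
  have h1 := h.2.1.comp_add_right ξ
  have h2 := h.2.2.1.comp_add_right ξ
  have h3 := h.2.2.2.comp_add_right ξ
  have hm : Differentiable ℝ (fun s => u (s + ξ)) := h.1.comp (differentiable_id.add_const ξ)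
  refine ⟨hm, h1, ?_, ?_⟩
  · simpa only [hd] using h2
  · refine ((h3.const_mul 2).add (h1.const_mul (2*ξ^2))).mono' ?_ (Eventually.of_forall ?_)
    · exact ((measurable_id.pow_const 2).mul (hm.continuous.measurable.pow_const 2)).aestronglyMeasurable
    · intro s
      simp only [Real.norm_eq_abs, Pi.add_apply]
      rw [abs_of_nonneg (by positivity)]
      nlinarith [mul_nonneg (sq_nonneg (s + 2*ξ)) (sq_nonneg (u (s+ξ)))]

lemma QI_eq {a m α : ℝ} (ξ : ℝ) {u : ℝ → ℝ} (h : MemB1 u) :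
    QI a m α ξ u = QS a m α (-ξ) (fun s => u (s + ξ)) := by
  have hd : ∀ s, deriv (fun s => u (s + ξ)) s = deriv u (s + ξ) := fun s =>
    deriv_comp_add_const u ξ s
  have hint := QS_integrable (a := a) (m := m) (α := α) (c := -ξ) (h.shift ξ)
  set F : ℝ → ℝ := fun t => pc m 0 t * ((deriv u t)^2 + (t-ξ)^2 * (u t)^2) + Vc a α 0 t * (u t)^2
    with hF
  have hFs : ∀ s, F (s + ξ) = pc m (-ξ) s * ((deriv (fun s => u (s + ξ)) s)^2 +
      s^2 * ((fun s => u (s + ξ)) s)^2) + Vc a α (-ξ) s * ((fun s => u (s + ξ)) s)^2 := by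
    intro s
    have e1 : pc m 0 (s+ξ) = pc m (-ξ) s := by
      simp only [pc]; congr 1; rw [neg_lt_iff_pos_add]
    have e2 : Vc a α 0 (s+ξ) = Vc a α (-ξ) s := by
      simp only [Vc]; congr 1; rw [neg_lt_iff_pos_add]
    simp only [hF, hd, e1, e2]; ring
  have hFi : Integrable F := by
    have := (hint.congr (Eventually.of_forall fun s => (hFs s).symm)).comp_add_right (-ξ)
    simpa using this
  have : QS a m α (-ξ) (fun s => u (s + ξ)) = ∫ t, F t := by
    rw [← integral_add_right_eq_self F ξ, QS]
    exact integral_congr_ae (Eventually.of_forall fun s => (hFs s).symm)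
  rw [this, ← integral_add_compl measurableSet_Ioi (s := Ioi (0:ℝ)) hFi, QI, compl_Ioi,
    integral_Iic_eq_integral_Iio]
  congr 1
  · refine setIntegral_congr_fun measurableSet_Ioi fun t ht => ?_
    have ht : 0 < t := ht
    simp only [hF, pc, Vc, if_pos ht]; ring
  · refine setIntegral_congr_fun measurableSet_Iio fun t ht => ?_
    have ht : ¬ 0 < t := not_lt.2 (le_of_lt ht)
    simp only [hF, pc, Vc, if_neg ht]

lemma nR_shift (u : ℝ → ℝ) (ξ : ℝ) : nR (fun s => u (s + ξ)) = nR u :=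
  integral_add_right_eq_self (fun t => (u t)^2) ξ

lemma mu1_eq (a m α ξ : ℝ) :
    mu1 a m α ξ = sInf {r : ℝ | ∃ v : ℝ → ℝ, MemB1 v ∧ nR v ≠ 0 ∧ r = QS a m α (-ξ) v / nR v} := by
  unfold mu1
  congr 1
  ext r
  constructor
  · rintro ⟨u, hu, hn, rfl⟩
    exact ⟨_, hu.shift ξ, by rwa [nR_shift], by rw [nR_shift, QI_eq ξ hu]⟩
  · rintro ⟨v, hv, hn, rfl⟩
    refine ⟨_, hv.shift (-ξ), by rwa [nR_shift], ?_⟩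
    rw [nR_shift, QI_eq ξ (hv.shift (-ξ))]
    simp

/-- harmonic oscillator integration by parts -/
lemma ho_parts {v : ℝ → ℝ} (h : MemB1 v) : ∫ s, ((v s)^2 + 2 * (s * v s * deriv v s)) = 0 := by
  have hi : Integrable (fun s => (v s)^2 + 2 * (s * v s * deriv v s)) :=
    h.2.1.add ((prod_int h.smeas (measurable_deriv v) h.sint h.2.2.1).const_mul 2)
  have hi2 : Integrable (fun s => s * v s * v s) := prod_int h.smeas h.meas h.sint h.2.1
  refine integral_eq_zero_of_hasDerivAt_of_integrable (f := fun s => s * v s * v s) ?_ hi hi2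
  intro x
  have hv := (h.1 x).hasDerivAt
  refine (((hasDerivAt_id' x).mul hv).mul hv).congr_deriv ?_
  simp only [Pi.mul_apply]; ring

lemma ho_bound {v : ℝ → ℝ} (h : MemB1 v) : nR v ≤ ∫ s, ((deriv v s)^2 + s^2 * (v s)^2) := by
  have h0 := ho_parts h
  have hi : Integrable (fun s => (v s)^2 + 2 * (s * v s * deriv v s)) :=
    h.2.1.add ((prod_int h.smeas (measurable_deriv v) h.sint h.2.2.1).const_mul 2)
  have hE : Integrable (fun s => (deriv v s)^2 + s^2 * (v s)^2) := h.2.2.1.add h.2.2.2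
  have : nR v = ∫ s, ((v s)^2 - ((v s)^2 + 2 * (s * v s * deriv v s))) := by
    rw [integral_sub h.2.1 hi, h0, sub_zero]; rfl
  rw [this]
  refine integral_mono (h.2.1.sub hi) hE fun s => ?_
  simp only
  nlinarith [sq_nonneg (deriv v s + s * v s)]

lemma pc_ge {m : ℝ} (hm0 : 0 < m) (hm : m ≤ 1) (c s : ℝ) : 1 ≤ pc m c s := by
  simp only [pc]; split_ifs
  · exact le_rfl
  · rw [le_div_iff₀ hm0]; linarith

lemma pc_le {m : ℝ} (hm0 : 0 < m) (hm : m ≤ 1) (c s : ℝ) : pc m c s ≤ 1/m := by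
  have : 1 ≤ 1/m := by rw [le_div_iff₀ hm0]; linarith
  simp only [pc]; split_ifs
  · exact this
  · exact le_rfl

lemma Vc_ge {a α : ℝ} (ha : 0 < a) (hα : 0 < α) (c s : ℝ) : -α ≤ Vc a α c s := by
  have := mul_pos ha hα
  simp only [Vc]; split_ifs <;> linarith

lemma Vc_le {a α : ℝ} (ha : 0 < a) (hα : 0 < α) (c s : ℝ) : Vc a α c s ≤ a*α := by
  have := mul_pos ha hα
  simp only [Vc]; split_ifs <;> linarith

lemma QS_ge {a m α : ℝ} (ha : 0 < a) (hm0 : 0 < m) (hm : m ≤ 1) (hα : 0 < α) (c : ℝ)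
    {v : ℝ → ℝ} (h : MemB1 v) :
    (∫ s, ((deriv v s)^2 + s^2 * (v s)^2)) - α * nR v ≤ QS a m α c v := by
  have hE : Integrable (fun s => (deriv v s)^2 + s^2 * (v s)^2) := h.2.2.1.add h.2.2.2
  unfold nR QS
  rw [← integral_const_mul, ← integral_sub hE (h.2.1.const_mul α)]
  refine integral_mono (hE.sub (h.2.1.const_mul α)) (QS_integrable h) fun s => ?_
  simp only
  have h1 := pc_ge hm0 hm c s
  have h2 := Vc_ge ha hα c s
  have h3 : 0 ≤ (deriv v s)^2 + s^2 * (v s)^2 := by positivity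
  nlinarith [mul_nonneg (sub_nonneg.2 h1) h3, mul_nonneg (sub_nonneg.2 h2) (sq_nonneg (v s))]

lemma nR_nonneg (v : ℝ → ℝ) : 0 ≤ nR v := integral_nonneg fun _ => sq_nonneg _

lemma QS_ge' {a m α : ℝ} (ha : 0 < a) (hm0 : 0 < m) (hm : m ≤ 1) (hα : 0 < α) (c : ℝ)
    {v : ℝ → ℝ} (h : MemB1 v) : (1 - α) * nR v ≤ QS a m α c v := by
  linarith [QS_ge ha hm0 hm hα c h, ho_bound h]

/-- difference of forms with shifted interfaces -/
lemma QS_mono {a m α : ℝ} (hm0 : 0 < m) (hm : m ≤ 1) {c d : ℝ}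
    (hcd : c ≤ d) {v : ℝ → ℝ} (h : MemB1 v) :
    QS a m α c v + (1+a)*α * (∫ s in Ioc c d, (v s)^2) ≤ QS a m α d v := by
  have hI : Integrable ((Ioc c d).indicator (fun s => (v s)^2)) := h.2.1.indicator measurableSet_Ioc
  unfold QS
  rw [← integral_indicator measurableSet_Ioc, ← integral_const_mul,
    ← integral_add (QS_integrable h) (hI.const_mul _)]
  refine integral_mono ((QS_integrable h).add (hI.const_mul _)) (QS_integrable h) fun s => ?_
  have h3 : 0 ≤ (deriv v s)^2 + s^2 * (v s)^2 := by positivity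
  have hm1 : 1 ≤ 1/m := by rw [le_div_iff₀ hm0]; linarith
  simp only [pc, Vc, indicator, mem_Ioc]
  by_cases h1 : c < s
  · by_cases h2 : d < s
    · simp [h1, h2, not_le.2 h2]
    · simp only [h1, h2, not_lt.1 h2, if_true, if_false, and_self]
      nlinarith [mul_nonneg (sub_nonneg.2 hm1) h3]
  · have h2 : ¬ d < s := by linarith [not_lt.1 h1]
    simp [h1, h2]

/-- Gaussian centred at `i` -/
def gs (K i s : ℝ) : ℝ := Real.exp (-(K/2) * (s - i)^2)

lemma gs_pos (K i s : ℝ) : 0 < gs K i s := Real.exp_pos _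

lemma gs_le {K : ℝ} (hK : 0 < K) (i s : ℝ) : gs K i s ≤ 1 := by
  unfold gs
  rw [Real.exp_le_one_iff]
  nlinarith [sq_nonneg (s - i)]

lemma gs_deriv (K i s : ℝ) : HasDerivAt (gs K i) (-K * (s - i) * gs K i s) s := by
  have h1 : HasDerivAt (fun s : ℝ => -(K/2) * (s - i)^2) (-K * (s-i)) s := by
    refine ((((hasDerivAt_id' s).sub_const i).pow 2).const_mul (-(K/2))).congr_deriv ?_
    simp only [Nat.cast_ofNat]; ring
  refine h1.exp.congr_deriv ?_
  unfold gs; ring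

lemma gs_deriv_eq (K i s : ℝ) : deriv (gs K i) s = -K * (s - i) * gs K i s := (gs_deriv K i s).deriv

lemma gs_deriv2 (K i s : ℝ) :
    HasDerivAt (fun s => -K * (s - i) * gs K i s) ((K^2 * (s-i)^2 - K) * gs K i s) s := by
  have h1 : HasDerivAt (fun s : ℝ => -K * (s - i)) (-K) s := by
    refine (((hasDerivAt_id' s).sub_const i).const_mul (-K)).congr_deriv ?_
    ring
  refine (h1.mul (gs_deriv K i s)).congr_deriv ?_
  ring

lemma gs_cont (K i : ℝ) : Continuous (gs K i) := by unfold gs; fun_prop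

lemma gs_sq (K i s : ℝ) : (gs K i s)^2 = Real.exp (-K * (s-i)^2) := by
  unfold gs; rw [← Real.exp_nat_mul]; congr 1; push_cast; ring

lemma gs_int {K : ℝ} (hK : 0 < K) (i : ℝ) (n : ℕ) :
    Integrable (fun s => (s - i)^n * (gs K i s)^2) := by
  have h := integrable_rpow_mul_exp_neg_mul_sq hK (s := n) (by linarith [Nat.cast_nonneg (α := ℝ) n])
  have h2 := h.comp_add_right (-i)
  refine h2.congr (Eventually.of_forall fun s => ?_)
  simp only [gs_sq, Real.rpow_natCast, sub_eq_add_neg]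

lemma gs_mem {K : ℝ} (hK : 0 < K) (i : ℝ) : MemB1 (gs K i) := by
  refine ⟨fun s => (gs_deriv K i s).differentiableAt, ?_, ?_, ?_⟩
  · simpa using gs_int hK i 0
  · refine ((gs_int hK i 2).const_mul (K^2)).congr (Eventually.of_forall fun s => ?_)
    simp only [gs_deriv_eq]; ring
  · refine (((gs_int hK i 2).add ((gs_int hK i 1).const_mul (2*i))).add
      ((gs_int hK i 0).const_mul (i^2))).congr (Eventually.of_forall fun s => ?_)
    simp only [Pi.add_apply]; ring

lemma gs_int4 {K : ℝ} (hK : 0 < K) (i : ℝ) :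
    Integrable (fun s => ((K^2 * (s-i)^2 - K) * gs K i s)^2) := by
  refine ((((gs_int hK i 4).const_mul (K^4)).sub ((gs_int hK i 2).const_mul (2*K^3))).add
      ((gs_int hK i 0).const_mul (K^2))).congr (Eventually.of_forall fun s => ?_)
  simp only [Pi.add_apply, Pi.sub_apply]; ring

lemma gs_meas2 (K i : ℝ) : Measurable (fun s => (K^2 * (s-i)^2 - K) * gs K i s) := by
  have := gs_cont K i
  exact Continuous.measurable (by fun_prop)

/-- integration by parts against the Gaussian, with the interface at its centre -/
lemma parts_gs {m K : ℝ} (hK : 0 < K) (i : ℝ) {w : ℝ → ℝ} (h : MemB1 w) :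
    ∫ s, pc m i s * (deriv w s * deriv (gs K i) s + w s * ((K^2 * (s-i)^2 - K) * gs K i s)) = 0 := by
  have hg := gs_mem hK i
  have hi2 : Integrable (fun s => w s * ((K^2 * (s-i)^2 - K) * gs K i s)) :=
    prod_int h.meas (gs_meas2 K i) h.2.1 (gs_int4 hK i)
  have hi : Integrable (fun s => deriv w s * deriv (gs K i) s +
      w s * ((K^2 * (s-i)^2 - K) * gs K i s)) := (h.dd hg).add hi2
  have hf : Integrable (fun s => w s * (-K * (s - i) * gs K i s)) := by
    simpa only [gs_deriv_eq] using h.ud hg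
  have hder : ∀ s, HasDerivAt (fun s => w s * (-K * (s - i) * gs K i s))
      (deriv w s * deriv (gs K i) s + w s * ((K^2 * (s-i)^2 - K) * gs K i s)) s := by
    intro s
    rw [gs_deriv_eq]
    exact (h.1 s).hasDerivAt.mul (gs_deriv2 K i s)
  have hA : ∫ s in Ioi i, (deriv w s * deriv (gs K i) s +
      w s * ((K^2 * (s-i)^2 - K) * gs K i s)) = 0 := by
    rw [integral_Ioi_of_hasDerivAt_of_tendsto (m := 0) (hder i).continuousAt.continuousWithinAt
      (fun x _ => hder x) hi.integrableOn
      (tendsto_zero_of_hasDerivAt_of_integrableOn_Ioi (a := i) (fun x _ => hder x) hi.integrableOn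
        hf.integrableOn)]
    simp
  have hB : ∫ s in Iic i, (deriv w s * deriv (gs K i) s +
      w s * ((K^2 * (s-i)^2 - K) * gs K i s)) = 0 := by
    rw [integral_Iic_of_hasDerivAt_of_tendsto' (m := 0) (fun x _ => hder x) hi.integrableOn
      (tendsto_zero_of_hasDerivAt_of_integrableOn_Iic (a := i) (fun x _ => hder x) hi.integrableOn
        hf.integrableOn)]
    simp
  rw [← integral_add_compl measurableSet_Ioi (s := Ioi i) (pc_int hi), compl_Ioi]
  have e1 : ∫ s in Ioi i, pc m i s * (deriv w s * deriv (gs K i) s +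
      w s * ((K^2 * (s-i)^2 - K) * gs K i s)) = 0 := by
    rw [← hA]
    refine setIntegral_congr_fun measurableSet_Ioi fun t ht => ?_
    have ht : i < t := ht
    simp only [pc, if_pos ht, one_mul]
  have e2 : ∫ s in Iic i, pc m i s * (deriv w s * deriv (gs K i) s +
      w s * ((K^2 * (s-i)^2 - K) * gs K i s)) = 0 := by
    rw [← mul_zero (1/m), ← hB, ← integral_const_mul]
    refine setIntegral_congr_fun measurableSet_Iic fun t ht => ?_
    have ht : ¬ i < t := not_lt.2 ht
    simp only [pc, if_neg ht]
  rw [e1, e2, add_zero]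

/-- sup bound -/
lemma sup_bound {w : ℝ → ℝ} (h : MemB1 w) (x : ℝ) :
    (w x)^2 ≤ nR w + ∫ s, (deriv w s)^2 := by
  have hi : Integrable (fun s => 2 * (w s * deriv w s)) := (h.ud h).const_mul 2
  have hder : ∀ s, HasDerivAt (fun s => (w s)^2) (2 * (w s * deriv w s)) s := by
    intro s
    refine ((h.1 s).hasDerivAt.pow 2).congr_deriv ?_
    simp only [Nat.cast_ofNat]; ring
  have hB : ∫ s in Iic x, 2 * (w s * deriv w s) = (w x)^2 := by
    rw [integral_Iic_of_hasDerivAt_of_tendsto' (m := 0) (fun x _ => hder x) hi.integrableOn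
      (tendsto_zero_of_hasDerivAt_of_integrableOn_Iic (a := x) (fun x _ => hder x) hi.integrableOn
        h.2.1.integrableOn)]
    simp
  rw [← hB, nR, ← integral_add h.2.1 h.2.2.1]
  have hs : Integrable (fun s => (w s)^2 + (deriv w s)^2) := h.2.1.add h.2.2.1
  calc _ ≤ ∫ s in Iic x, ((w s)^2 + (deriv w s)^2) := by
        refine integral_mono hi.integrableOn hs.integrableOn fun s => ?_
        simp only
        nlinarith [sq_nonneg (w s - deriv w s)]
    _ ≤ _ := setIntegral_le_integral hs (Eventually.of_forall fun s => by simp only [Pi.zero_apply]; positivity)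

lemma MemB1.smul {v : ℝ → ℝ} (h : MemB1 v) (k : ℝ) : MemB1 (fun s => k * v s) := by
  have hd : ∀ s, deriv (fun s => k * v s) s = k * deriv v s := fun s =>
    ((h.1 s).hasDerivAt.const_mul k).deriv
  refine ⟨h.1.const_mul k, ?_, ?_, ?_⟩
  · simpa only [mul_pow] using h.2.1.const_mul (k^2)
  · simpa only [hd, mul_pow] using h.2.2.1.const_mul (k^2)
  · refine (h.2.2.2.const_mul (k^2)).congr (Eventually.of_forall fun s => ?_)
    simp only; ring

lemma nR_smul (v : ℝ → ℝ) (k : ℝ) : nR (fun s => k * v s) = k^2 * nR v := by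
  simp only [nR, mul_pow, integral_const_mul]

lemma QS_smul {a m α c : ℝ} {v : ℝ → ℝ} (h : MemB1 v) (k : ℝ) :
    QS a m α c (fun s => k * v s) = k^2 * QS a m α c v := by
  have hd : ∀ s, deriv (fun s => k * v s) s = k * deriv v s := fun s =>
    ((h.1 s).hasDerivAt.const_mul k).deriv
  unfold QS
  rw [← integral_const_mul]
  refine integral_congr_ae (Eventually.of_forall fun s => ?_)
  simp only [hd]; ring

lemma MemB1.add {u v : ℝ → ℝ} (h : MemB1 u) (k : MemB1 v) : MemB1 (fun s => u s + v s) := by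
  have hd : ∀ s, deriv (fun s => u s + v s) s = deriv u s + deriv v s := fun s =>
    ((h.1 s).hasDerivAt.add (k.1 s).hasDerivAt).deriv
  refine ⟨h.1.add k.1, ?_, ?_, ?_⟩
  · refine ((h.2.1.add k.2.1).add ((h.uu k).const_mul 2)).congr (Eventually.of_forall fun s => ?_)
    simp only [Pi.add_apply]; ring
  · refine ((h.2.2.1.add k.2.2.1).add ((h.dd k).const_mul 2)).congr
      (Eventually.of_forall fun s => ?_)
    simp only [Pi.add_apply, hd]; ring
  · refine ((h.2.2.2.add k.2.2.2).add ((h.ss k).const_mul 2)).congr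
      (Eventually.of_forall fun s => ?_)
    simp only [Pi.add_apply]; ring

/-- first variation against the Gaussian -/
lemma variation {a m α μ K : ℝ} (hK : 0 < K) (i : ℝ) {w : ℝ → ℝ} (h : MemB1 w) (t : ℝ) :
    QS a m α i (fun s => w s + t * gs K i s) - μ * nR (fun s => w s + t * gs K i s) =
    (QS a m α i w - μ * nR w) + t^2 * (QS a m α i (gs K i) - μ * nR (gs K i)) +
    2 * t * ∫ s, (pc m i s * (s^2 + K - K^2 * (s-i)^2) + Vc a α i s - μ) * (gs K i s * w s) := by
  have hg := gs_mem hK i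
  have hd : ∀ s, deriv (fun s => w s + t * gs K i s) s = deriv w s + t * deriv (gs K i) s := fun s =>
    ((h.1 s).hasDerivAt.add ((hg.1 s).hasDerivAt.const_mul t)).deriv
  have hs := h.add (hg.smul t)
  have hi2 : Integrable (fun s => w s * ((K^2 * (s-i)^2 - K) * gs K i s)) :=
    prod_int h.meas (gs_meas2 K i) h.2.1 (gs_int4 hK i)
  have hi : Integrable (fun s => deriv w s * deriv (gs K i) s +
      w s * ((K^2 * (s-i)^2 - K) * gs K i s)) := (h.dd hg).add hi2
  have h0 := parts_gs (m := m) hK i h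
  have hpi := pc_int (m := m) (c := i) hi
  have hX : Integrable (fun s => (pc m i s * (s^2 + K - K^2 * (s-i)^2) + Vc a α i s - μ) *
      (gs K i s * w s)) := by
    refine (((pc_int (m := m) (c := i) ((h.ss hg).sub hi2)).add
      (Vc_int (a := a) (α := α) (c := i) (h.uu hg))).sub
      ((h.uu hg).const_mul μ)).congr (Eventually.of_forall fun s => ?_)
    simp only [Pi.add_apply, Pi.sub_apply]; ring
  have hQ : ∀ {u : ℝ → ℝ}, MemB1 u → QS a m α i u - μ * nR u =
      ∫ s, ((pc m i s * ((deriv u s)^2 + s^2 * (u s)^2) + Vc a α i s * (u s)^2) - μ * (u s)^2) := by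
    intro u hu
    rw [integral_sub (QS_integrable hu) (hu.2.1.const_mul μ), integral_const_mul]; rfl
  have hQi : ∀ {u : ℝ → ℝ}, MemB1 u → Integrable (fun s =>
      ((pc m i s * ((deriv u s)^2 + s^2 * (u s)^2) + Vc a α i s * (u s)^2) - μ * (u s)^2)) :=
    fun hu => (QS_integrable hu).sub (hu.2.1.const_mul μ)
  rw [← add_zero (∫ s, (pc m i s * (s^2 + K - K^2 * (s-i)^2) + Vc a α i s - μ) *
      (gs K i s * w s)), ← h0, ← integral_add hX hpi, hQ hs, hQ h, hQ hg, ← integral_const_mul,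
      ← integral_const_mul, ← integral_add (hQi h) ((hQi hg).const_mul _), ← integral_add]
  · refine integral_congr_ae (Eventually.of_forall fun s => ?_)
    simp only [hd]; ring
  · exact (hQi h).add ((hQi hg).const_mul _)
  · exact (hX.add hpi).const_mul _

/-- hidden convexity: positive regularisation of the absolute value -/
lemma hidden_convexity {a m α : ℝ} (hm0 : 0 < m) (hm : m ≤ 1) (c : ℝ)
    {v g : ℝ → ℝ} (h : MemB1 v) (hg : MemB1 g) (hgp : ∀ s, 0 < g s) :
    ∃ w : ℝ → ℝ, MemB1 w ∧ (∀ s, 0 < w s) ∧ (∀ s, (w s)^2 = (v s)^2 + (g s)^2) ∧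
      QS a m α c w ≤ QS a m α c v + QS a m α c g := by
  have hpos : ∀ s, 0 < (v s)^2 + (g s)^2 := fun s => by have := hgp s; positivity
  set w : ℝ → ℝ := fun s => Real.sqrt ((v s)^2 + (g s)^2) with hw
  have hwp : ∀ s, 0 < w s := fun s => Real.sqrt_pos.2 (hpos s)
  have hw2 : ∀ s, (w s)^2 = (v s)^2 + (g s)^2 := fun s => Real.sq_sqrt (hpos s).le
  have hder : ∀ s, HasDerivAt w ((2 * v s * deriv v s + 2 * g s * deriv g s) / (2 * w s)) s := by
    intro s
    have := ((h.1 s).hasDerivAt.pow 2).add ((hg.1 s).hasDerivAt.pow 2)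
    refine (this.sqrt (hpos s).ne').congr_deriv ?_
    simp [hw]
  have hdle : ∀ s, (deriv w s)^2 ≤ (deriv v s)^2 + (deriv g s)^2 := by
    intro s
    have e : w s * deriv w s = v s * deriv v s + g s * deriv g s := by
      rw [(hder s).deriv]; field_simp [(hwp s).ne']
    have h1 : (w s)^2 * (deriv w s)^2 ≤ (w s)^2 * ((deriv v s)^2 + (deriv g s)^2) := by
      rw [← mul_pow, e, hw2]
      nlinarith [sq_nonneg (v s * deriv g s - g s * deriv v s)]
    exact le_of_mul_le_mul_left h1 (pow_pos (hwp s) 2)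
  have hwm : MemB1 w := by
    have hwd : Differentiable ℝ w := fun s => (hder s).differentiableAt
    refine ⟨hwd, ?_, ?_, ?_⟩
    · simp only [hw2]; exact h.2.1.add hg.2.1
    · refine (h.2.2.1.add hg.2.2.1).mono' ((measurable_deriv w).pow_const 2).aestronglyMeasurable
        (Eventually.of_forall fun s => ?_)
      simp only [Real.norm_eq_abs, Pi.add_apply]
      rw [abs_of_nonneg (sq_nonneg _)]; exact hdle s
    · simp only [hw2, mul_add]; exact h.2.2.2.add hg.2.2.2
  refine ⟨w, hwm, hwp, hw2, ?_⟩
  unfold QS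
  rw [← integral_add (QS_integrable h) (QS_integrable hg)]
  refine integral_mono (QS_integrable hwm) ((QS_integrable h).add (QS_integrable hg)) fun s => ?_
  simp only [hw2]
  have := mul_le_mul_of_nonneg_left (hdle s) (le_trans zero_le_one (pc_ge hm0 hm c s))
  nlinarith

lemma X_int {a m α μ K : ℝ} (hK : 0 < K) (i : ℝ) {w : ℝ → ℝ} (h : MemB1 w) :
    Integrable (fun s => (pc m i s * (s^2 + K - K^2 * (s-i)^2) + Vc a α i s - μ) *
      (gs K i s * w s)) := by
  have hg := gs_mem hK i
  have hi2 : Integrable (fun s => w s * ((K^2 * (s-i)^2 - K) * gs K i s)) :=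
    prod_int h.meas (gs_meas2 K i) h.2.1 (gs_int4 hK i)
  refine (((pc_int (m := m) (c := i) ((h.ss hg).sub hi2)).add
    (Vc_int (a := a) (α := α) (c := i) (h.uu hg))).sub
    ((h.uu hg).const_mul μ)).congr (Eventually.of_forall fun s => ?_)
  simp only [Pi.add_apply, Pi.sub_apply]; ring

lemma exists_K (δ i C : ℝ) (hδ : 0 < δ) (hC : 0 ≤ C) :
    ∃ K : ℝ, 0 < K ∧ 2 ≤ K^2 ∧ 2*δ^2 + 2*i^2 + K + C ≤ K^2*δ^2 := by
  set T := 2*δ^2 + 2*i^2 + C + 1 with hT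
  have hT1 : 1 ≤ T := by rw [hT]; nlinarith [sq_nonneg δ, sq_nonneg i]
  have hd2 : 0 < δ^2 := by positivity
  have hq : 2 ≤ T/δ^2 := by rw [le_div_iff₀ hd2]; rw [hT]; nlinarith [sq_nonneg i]
  refine ⟨1 + T/δ^2, by linarith, by nlinarith, ?_⟩
  have e : (1 + T/δ^2) * δ^2 = T + δ^2 := by field_simp; ring
  have e2 : (1 + T/δ^2)^2 * δ^2 = (1 + T/δ^2) * (T + δ^2) := by rw [← e]; ring
  rw [e2]
  set K := 1 + T/δ^2
  nlinarith [mul_nonneg (sub_nonneg.2 hT1) (by linarith : 0 ≤ K - 1), mul_pos (by linarith : 0 < K) hd2]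

lemma F_off {a m α μ K δ i : ℝ} (ha : 0 < a) (hm0 : 0 < m) (hm : m ≤ 1) (hα : 0 < α)
    (hμ : 1 - α ≤ μ) (hK2 : 2 ≤ K^2)
    (hK3 : 2*δ^2 + 2*i^2 + K + (a*α + α) ≤ K^2*δ^2) {s : ℝ} (hs : δ^2 ≤ (s - i)^2) :
    pc m i s * (s^2 + K - K^2 * (s-i)^2) + Vc a α i s - μ ≤ -1 := by
  have h1 := pc_ge hm0 hm i s
  have h2 := Vc_le ha hα i s
  have haα := mul_pos ha hα
  have h3 : s^2 + K - K^2 * (s-i)^2 ≤ -(a*α+α) := by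
    have : s^2 ≤ 2*(s-i)^2 + 2*i^2 := by nlinarith [sq_nonneg (s - 2*i)]
    nlinarith [mul_nonneg (sub_nonneg.2 hK2) (sub_nonneg.2 hs)]
  nlinarith [mul_nonneg (sub_nonneg.2 h1) (by linarith : 0 ≤ -(s^2 + K - K^2 * (s-i)^2))]

lemma F_on {a m α μ K δ i : ℝ} (ha : 0 < a) (hm0 : 0 < m) (hm : m ≤ 1) (hα : 0 < α)
    (hμ : 1 - α ≤ μ) (hK : 0 < K) {s : ℝ} (hs : (s - i)^2 ≤ δ^2) :
    pc m i s * (s^2 + K - K^2 * (s-i)^2) + Vc a α i s - μ ≤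
      (1/m) * (2*δ^2 + 2*i^2 + K) + a*α + α := by
  have h1 := pc_ge hm0 hm i s
  have h1' := pc_le hm0 hm i s
  have h2 := Vc_le ha hα i s
  have h3 : s^2 + K - K^2 * (s-i)^2 ≤ 2*δ^2 + 2*i^2 + K := by
    have : s^2 ≤ 2*(s-i)^2 + 2*i^2 := by nlinarith [sq_nonneg (s - 2*i)]
    nlinarith [mul_nonneg (sq_nonneg K) (sq_nonneg (s-i))]
  have h4 : 0 ≤ 2*δ^2 + 2*i^2 + K := by positivity
  have h5 := mul_le_mul_of_nonneg_left h3 (by linarith : 0 ≤ pc m i s)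
  have h6 := mul_le_mul_of_nonneg_right h1' h4
  linarith

set_option maxHeartbeats 2000000 in
lemma core {a m α : ℝ} (ha : 0 < a) (hm0 : 0 < m) (hm : m ≤ 1) (hα : 0 < α) {c0 c1 μ : ℝ}
    (hc : c0 < c1) (hμ : 1 - α ≤ μ) (hlow : ∀ v, MemB1 v → μ * nR v ≤ QS a m α c0 v)
    (happ : ∀ ε : ℝ, 0 < ε → ∃ v, MemB1 v ∧ nR v = 1 ∧ QS a m α c1 v ≤ μ + ε) : False := by
  have haα := mul_pos ha hα
  have hb : 0 < (1+a)*α := by nlinarith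
  set i := (c0 + c1)/2 with hi
  set δ := (c1 - c0)/2 with hδ
  have hδ0 : 0 < δ := by rw [hδ]; linarith
  have hI0 : c0 = i - δ := by rw [hi, hδ]; ring
  have hI1 : c1 = i + δ := by rw [hi, hδ]; ring
  obtain ⟨K, hK, hK2, hK3⟩ := exists_K δ i (a*α+α) hδ0 (by linarith)
  have hg := gs_mem hK i
  set g := gs K i with hgdef
  have hlowi : ∀ v, MemB1 v → μ * nR v ≤ QS a m α i v := by
    intro v hv
    have h1 := QS_mono (a := a) (α := α) hm0 hm (by linarith : c0 ≤ i) hv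
    have h2 : 0 ≤ ∫ s in Ioc c0 i, (v s)^2 := integral_nonneg fun _ => sq_nonneg _
    have h3 := mul_nonneg hb.le h2
    linarith [hlow v hv]
  obtain ⟨G, hG⟩ : ∃ G, G = QS a m α i g - μ * nR g := ⟨_, rfl⟩
  have hG0 : 0 ≤ G := by rw [hG]; linarith [hlowi g hg]
  obtain ⟨N, hN⟩ : ∃ N, N = nR g := ⟨_, rfl⟩
  have hN0 : 0 ≤ N := by rw [hN]; exact nR_nonneg g
  obtain ⟨B, hB⟩ : ∃ B, B = 1/((1+a)*α) + N := ⟨_, rfl⟩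
  have hB0 : 0 ≤ B := by rw [hB]; positivity
  obtain ⟨CF, hCF⟩ : ∃ CF, CF = (1/m) * (2*δ^2 + 2*i^2 + K) + a*α + α := ⟨_, rfl⟩
  have hCF0 : 0 ≤ CF := by rw [hCF]; positivity
  obtain ⟨M, hM⟩ : ∃ M, M = (1 + G) + (μ + α) * (1 + N) := ⟨_, rfl⟩
  have hM0 : 0 ≤ M := by
    rw [hM]; have : 0 ≤ (μ+α)*(1+N) := mul_nonneg (by linarith) (by linarith)
    linarith
  obtain ⟨S, hS⟩ : ∃ S, S = 1 + (1 + N + M) := ⟨_, rfl⟩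
  obtain ⟨R, hR⟩ : ∃ R, R = 1 + 2*M := ⟨_, rfl⟩
  have hR1 : 1 ≤ R := by linarith
  obtain ⟨r, hr⟩ : ∃ r, r = Real.exp (-(K/2) * (R + |i|)^2) := ⟨_, rfl⟩
  have hr0 : 0 < r := by rw [hr]; exact Real.exp_pos _
  obtain ⟨D, hD⟩ : ∃ D, D = (1 + G + G)/2 + (1 + CF) * (δ + B/2) := ⟨_, rfl⟩
  have hD0 : 0 ≤ D := by rw [hD]; positivity
  have key : ∀ e : ℝ, 0 < e → e ≤ 1 → 1/2 ≤ e * (B + S/r * D) := by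
    intro e he he1
    obtain ⟨v, hv, hvn, hvQ⟩ := happ (e^2) (by positivity)
    have he2 : e^2 ≤ 1 := pow_le_one₀ he.le he1
    -- smallness on the window
    have hvI : ∫ s in Ioc c0 c1, (v s)^2 ≤ e^2 * (1/((1+a)*α)) := by
      have h1 := QS_mono (a := a) (α := α) hm0 hm hc.le hv
      have h2 := hlow v hv
      rw [hvn] at h2
      rw [mul_one_div, le_div_iff₀ hb]
      linarith
    have hvi : QS a m α i v ≤ μ + e^2 := by
      have h1 := QS_mono (a := a) (α := α) hm0 hm (by linarith : i ≤ c1) hv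
      have h2 : 0 ≤ ∫ s in Ioc i c1, (v s)^2 := integral_nonneg fun _ => sq_nonneg _
      have h3 := mul_nonneg hb.le h2
      linarith
    obtain ⟨w, hw, hwp, hw2, hwQ⟩ := hidden_convexity (a := a) (α := α) hm0 hm i hv (hg.smul e)
      (fun s => mul_pos he (gs_pos K i s))
    have hwn : nR w = 1 + e^2 * N := by
      rw [hN, ← nR_smul, ← hvn]
      unfold nR
      rw [← integral_add hv.2.1 (hg.smul e).2.1]
      simp only [hw2]
    rw [QS_smul hg] at hwQ
    have hwG : QS a m α i w - μ * nR w ≤ e^2 * (1 + G) := by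
      rw [hwn, hG, ← hN]; linarith
    have hwE : (∫ s, ((deriv w s)^2 + s^2 * (w s)^2)) ≤ M := by
      have h1 := QS_ge ha hm0 hm hα i hw
      have h2 : e^2 * (1+G) ≤ 1 + G := mul_le_of_le_one_left (by linarith) he2
      have h3 : nR w ≤ 1 + N := by rw [hwn]; linarith [mul_le_of_le_one_left hN0 he2]
      have h4 := mul_le_mul_of_nonneg_left h3 (by linarith : 0 ≤ μ + α)
      rw [hM]; linarith
    have hwE' : (∫ s, (deriv w s)^2) + ∫ s, s^2 * (w s)^2 ≤ M := by
      rw [← integral_add hw.2.2.1 hw.2.2.2]; exact hwE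
    have hp1 : 0 ≤ ∫ s, (deriv w s)^2 := integral_nonneg fun _ => sq_nonneg _
    have hp2 : 0 ≤ ∫ s, s^2 * (w s)^2 := integral_nonneg fun s => by positivity
    have hsup : ∀ s, w s ≤ S := by
      intro s
      have h1 := sup_bound hw s
      have h3 : nR w ≤ 1 + N := by rw [hwn]; linarith [mul_le_of_le_one_left hN0 he2]
      rw [hS]; linarith [sq_nonneg (w s - 1), hwp s, (by ring : (w s - 1)^2 = (w s)^2 - 2 * w s + 1)]
    have hwI : ∫ s in Ioc c0 c1, (w s)^2 ≤ e^2 * B := by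
      have h1 : ∫ s in Ioc c0 c1, (w s)^2 =
          (∫ s in Ioc c0 c1, (v s)^2) + ∫ s in Ioc c0 c1, (e * g s)^2 := by
        rw [← integral_add hv.2.1.integrableOn (hg.smul e).2.1.integrableOn]
        simp only [hw2]
      have h2 : ∫ s in Ioc c0 c1, (e * g s)^2 ≤ e^2 * N := by
        rw [hN, ← nR_smul]
        exact setIntegral_le_integral (hg.smul e).2.1 (Eventually.of_forall fun s => sq_nonneg _)
      rw [h1, hB]; linarith
    have hwii : IntegrableOn w (Ioc c0 c1) :=
      (hw.1.continuous.integrableOn_Icc).mono_set Ioc_subset_Icc_self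
    have hwI1 : ∫ s in Ioc c0 c1, w s ≤ e * (δ + B/2) := by
      have h0 : IntegrableOn (fun s => e/2 + 1/(2*e) * (w s)^2) (Ioc c0 c1) :=
        (integrableOn_const (by simp)).add (hw.2.1.integrableOn.const_mul _)
      have h1 : ∫ s in Ioc c0 c1, w s ≤ ∫ s in Ioc c0 c1, (e/2 + 1/(2*e) * (w s)^2) := by
        refine integral_mono hwii h0 fun s => ?_
        have : e/2 + 1/(2*e) * (w s)^2 - w s = (w s - e)^2/(2*e) := by field_simp; ring
        have h2 : 0 ≤ (w s - e)^2/(2*e) := by positivity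
        simp only; linarith
      have h2 : ∫ s in Ioc c0 c1, (e/2 + 1/(2*e) * (w s)^2) =
          e * δ + 1/(2*e) * ∫ s in Ioc c0 c1, (w s)^2 := by
        have hcst : Integrable (fun _ : ℝ => e/2) (volume.restrict (Ioc c0 c1)) :=
          integrable_const _
        have hsq : Integrable (fun s => 1/(2*e) * (w s)^2) (volume.restrict (Ioc c0 c1)) :=
          hw.2.1.integrableOn.const_mul _
        rw [integral_add hcst hsq,
          integral_const_mul, setIntegral_const]
        congr 1
        rw [Measure.real, Real.volume_Ioc, ENNReal.toReal_ofReal (by linarith), smul_eq_mul, hδ]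
        ring
      have h3 : 1/(2*e) * (∫ s in Ioc c0 c1, (w s)^2) ≤ 1/(2*e) * (e^2 * B) :=
        mul_le_mul_of_nonneg_left hwI (by positivity)
      have h4 : 1/(2*e) * (e^2 * B) = e * (B/2) := by field_simp
      linarith
    -- first variation
    have hvar := variation (a := a) (m := m) (α := α) (μ := μ) hK i hw e
    have hpos := hlowi _ (hw.add (hg.smul e))
    have hX := X_int (a := a) (m := m) (α := α) (μ := μ) hK i hw
    rw [← hgdef] at hvar hX
    rw [← hG] at hvar
    have hP : -(∫ s, (pc m i s * (s^2 + K - K^2 * (s-i)^2) + Vc a α i s - μ) * (g s * w s)) ≤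
        e * ((1 + G + G)/2) := by
      refine le_of_mul_le_mul_left ?_ (by positivity : 0 < 2 * e)
      linarith
    have hgw : ∫ s, g s * w s ≤ e * D := by
      have hJ : Integrable ((Ioc c0 c1).indicator w) := (integrable_indicator_iff measurableSet_Ioc).2 hwii
      have h1 : ∫ s, g s * w s ≤ ∫ s, (-((pc m i s * (s^2 + K - K^2 * (s-i)^2) + Vc a α i s - μ) *
          (g s * w s)) + (1 + CF) * (Ioc c0 c1).indicator w s) := by
        refine integral_mono (hg.uu hw) (hX.neg.add (hJ.const_mul _)) fun s => ?_
        have hgw0 : 0 < g s * w s := mul_pos (gs_pos K i s) (hwp s)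
        simp only
        by_cases hs : s ∈ Ioc c0 c1
        · rw [indicator_of_mem hs]
          have hs2 : (s - i)^2 ≤ δ^2 := by
            rw [hI0, hI1] at hs
            apply sq_le_sq'
            · linarith [hs.1]
            · linarith [hs.2]
          have hF := F_on (m := m) ha hm0 hm hα hμ hK hs2
          rw [← hCF] at hF
          have h5 : g s * w s ≤ w s := by
            have := mul_le_mul_of_nonneg_right (gs_le hK i s) (hwp s).le
            linarith
          nlinarith [mul_le_mul_of_nonneg_right hF hgw0.le,
            mul_le_mul_of_nonneg_left h5 (by linarith : 0 ≤ 1 + CF)]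
        · rw [indicator_of_notMem hs]
          have hs2 : δ^2 ≤ (s - i)^2 := by
            rw [hI0, hI1] at hs
            by_cases h6 : i - δ < s
            · have : i + δ < s := by
                by_contra h7
                exact hs ⟨h6, not_lt.1 h7⟩
              exact pow_le_pow_left₀ hδ0.le (by linarith) 2
            · rw [← neg_sq (s - i)]
              exact pow_le_pow_left₀ hδ0.le (by linarith [not_lt.1 h6]) 2
          have hF := F_off (m := m) ha hm0 hm hα hμ hK2 hK3 hs2
          nlinarith [mul_le_mul_of_nonneg_right hF hgw0.le]
      have hXn : Integrable (fun s => -((pc m i s * (s^2 + K - K^2 * (s-i)^2) + Vc a α i s - μ) *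
          (g s * w s))) := hX.neg
      rw [integral_add hXn (hJ.const_mul _), integral_neg, integral_const_mul,
        integral_indicator measurableSet_Ioc] at h1
      have h2 := mul_le_mul_of_nonneg_left hwI1 (by linarith : 0 ≤ 1 + CF)
      rw [hD]; linarith
    -- final estimate
    have hJ2 : Integrable ((Ioc c0 c1).indicator fun s => (w s)^2) := hw.2.1.indicator measurableSet_Ioc
    have hS0 : 0 ≤ S := (hwp 0).le.trans (hsup 0)
    have hfin : nR w ≤ ∫ s, ((Ioc c0 c1).indicator (fun s => (w s)^2) s + S/r * (g s * w s) +
        1/R^2 * (s^2 * (w s)^2)) := by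
      refine integral_mono hw.2.1 ((hJ2.add ((hg.uu hw).const_mul _)).add (hw.2.2.2.const_mul _))
        fun s => ?_
      have h1 : 0 ≤ (Ioc c0 c1).indicator (fun s => (w s)^2) s :=
        indicator_nonneg (fun s _ => sq_nonneg _) s
      have hgw0 : 0 < g s * w s := mul_pos (gs_pos K i s) (hwp s)
      have hws := hwp s
      by_cases hs : |s| ≤ R
      · have h2 : r ≤ g s := by
          rw [hr, hgdef, gs]
          apply Real.exp_le_exp.2
          have h3 : |s - i| ≤ R + |i| := (abs_sub s i).trans (by linarith)
          have h4 : (s-i)^2 ≤ (R + |i|)^2 := by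
            rw [← sq_abs (s-i)]; exact pow_le_pow_left₀ (abs_nonneg _) h3 2
          exact mul_le_mul_of_nonpos_left h4 (by linarith)
        have h5 : (w s)^2 ≤ S/r * (g s * w s) := by
          have h6 : r * w s ≤ g s * w s := mul_le_mul_of_nonneg_right h2 hws.le
          have h7 : S/r * (r * w s) ≤ S/r * (g s * w s) :=
            mul_le_mul_of_nonneg_left h6 (by positivity)
          have h8 : S/r * (r * w s) = S * w s := by field_simp
          have h10 := mul_le_mul_of_nonneg_right (hsup s) hws.le
          linarith [pow_two (w s)]
        have h9 : 0 ≤ 1/R^2 * (s^2 * (w s)^2) := by positivity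
        simp only; linarith
      · have h2 : R^2 ≤ s^2 := by
          rw [← sq_abs s]; exact pow_le_pow_left₀ (by linarith) (not_le.1 hs).le 2
        have h3 : (w s)^2 ≤ 1/R^2 * (s^2 * (w s)^2) := by
          rw [one_div, ← div_eq_inv_mul, le_div_iff₀ (by positivity)]
          rw [mul_comm]; exact mul_le_mul_of_nonneg_right h2 (sq_nonneg _)
        have h9 : 0 ≤ S/r * (g s * w s) := by positivity
        simp only; linarith
    have hJ3 : Integrable (fun s => (Ioc c0 c1).indicator (fun s => (w s)^2) s +
        S/r * (g s * w s)) := hJ2.add ((hg.uu hw).const_mul _)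
    rw [integral_add hJ3 (hw.2.2.2.const_mul _),
      integral_add hJ2 ((hg.uu hw).const_mul _), integral_const_mul, integral_const_mul,
      integral_indicator measurableSet_Ioc] at hfin
    have hq1 : 1/R^2 * (∫ s, s^2 * (w s)^2) ≤ 1/2 := by
      rw [one_div, ← div_eq_inv_mul, div_le_iff₀ (by positivity)]
      have : R ≤ R^2 := by rw [pow_two]; exact le_mul_of_one_le_left (by linarith) hR1
      linarith
    have hq2 : S/r * (∫ s, g s * w s) ≤ S/r * (e * D) :=
      mul_le_mul_of_nonneg_left hgw (by positivity)
    have hq3 : 1 ≤ nR w := by rw [hwn]; linarith [mul_nonneg (sq_nonneg e) hN0]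
    have hq4 : e^2 * B ≤ e * B := mul_le_mul_of_nonneg_right (by rw [pow_two]; exact mul_le_of_le_one_left he.le he1) hB0
    have : e * (B + S/r * D) = e * B + S/r * (e * D) := by ring
    linarith
  set E := B + S/r * D with hE
  have hE0 : 0 < E := by have := key 1 one_pos le_rfl; linarith
  have h1 := key (1/(2*E+2)) (by positivity) (by rw [div_le_iff₀ (by positivity)]; linarith)
  rw [one_div_mul_eq_div, div_le_div_iff₀ (by norm_num) (by positivity)] at h1
  linarith

lemma nR_gs : 0 < nR (gs 1 0) := by
  unfold nR
  have : (fun s => (gs 1 0 s)^2) = fun s : ℝ => Real.exp (-1 * s^2) := by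
    funext s; rw [gs_sq]; simp
  rw [this, integral_gaussian]
  positivity

lemma mu_bdd {a m α : ℝ} (ha : 0 < a) (hm0 : 0 < m) (hm : m ≤ 1) (hα : 0 < α) (ξ : ℝ) :
    ∀ r ∈ {r : ℝ | ∃ v : ℝ → ℝ, MemB1 v ∧ nR v ≠ 0 ∧ r = QS a m α (-ξ) v / nR v}, 1 - α ≤ r := by
  rintro r ⟨v, hv, hn, rfl⟩
  rw [le_div_iff₀ (lt_of_le_of_ne (nR_nonneg v) hn.symm)]
  exact QS_ge' ha hm0 hm hα _ hv

lemma mu_ne (a m α ξ : ℝ) :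
    {r : ℝ | ∃ v : ℝ → ℝ, MemB1 v ∧ nR v ≠ 0 ∧ r = QS a m α (-ξ) v / nR v}.Nonempty :=
  ⟨_, _, gs_mem one_pos 0, nR_gs.ne', rfl⟩

lemma mu_ge {a m α : ℝ} (ha : 0 < a) (hm0 : 0 < m) (hm : m ≤ 1) (hα : 0 < α) (ξ : ℝ) :
    1 - α ≤ mu1 a m α ξ := by
  rw [mu1_eq]
  exact le_csInf (mu_ne a m α ξ) (mu_bdd ha hm0 hm hα ξ)

lemma mu_le {a m α : ℝ} (ha : 0 < a) (hm0 : 0 < m) (hm : m ≤ 1) (hα : 0 < α) (ξ : ℝ)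
    {v : ℝ → ℝ} (hv : MemB1 v) : mu1 a m α ξ * nR v ≤ QS a m α (-ξ) v := by
  by_cases hn : nR v = 0
  · have := QS_ge' ha hm0 hm hα (-ξ) hv
    rw [hn] at this ⊢
    simpa using this
  · rw [← le_div_iff₀ (lt_of_le_of_ne (nR_nonneg v) (Ne.symm hn)), mu1_eq]
    exact csInf_le ⟨_, mu_bdd ha hm0 hm hα ξ⟩ ⟨v, hv, hn, rfl⟩

lemma mu_approx (a m α ξ ε : ℝ) (hε : 0 < ε) :
    ∃ v, MemB1 v ∧ nR v = 1 ∧ QS a m α (-ξ) v ≤ mu1 a m α ξ + ε := by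
  have h := mu1_eq a m α ξ
  obtain ⟨r, ⟨v, hv, hn, rfl⟩, hr⟩ := exists_lt_of_csInf_lt (mu_ne a m α ξ)
    (by rw [← h]; linarith : _ < mu1 a m α ξ + ε)
  have hn0 : 0 < nR v := lt_of_le_of_ne (nR_nonneg v) (Ne.symm hn)
  have hk : ((Real.sqrt (nR v))⁻¹)^2 = (nR v)⁻¹ := by rw [inv_pow, Real.sq_sqrt hn0.le]
  refine ⟨_, hv.smul (Real.sqrt (nR v))⁻¹, ?_, ?_⟩
  · rw [nR_smul, hk, inv_mul_cancel₀ hn]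
  · rw [QS_smul hv, hk, ← div_eq_inv_mul]; exact hr.le

lemma QS_gauss (a m α c : ℝ) : QS a m α c (gs 1 0) = (1 - α) * nR (gs 1 0) +
    ∫ s in Iic c, ((1/m - 1) * (2 * s^2) + (1+a)*α) * (gs 1 0 s)^2 := by
  have hg := gs_mem one_pos 0
  have h0 := ho_parts hg
  have hd : ∀ s, deriv (gs 1 0) s = - s * gs 1 0 s := fun s => by rw [gs_deriv_eq]; ring
  have hi : Integrable (fun s => (gs 1 0 s)^2 + 2 * (s * gs 1 0 s * deriv (gs 1 0) s)) :=
    hg.2.1.add ((prod_int hg.smeas (measurable_deriv _) hg.sint hg.2.2.1).const_mul 2)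
  have hT : Integrable (fun s => ((1/m - 1) * (2 * s^2) + (1+a)*α) * (gs 1 0 s)^2) := by
    refine ((hg.2.2.2.const_mul ((1/m-1)*2)).add (hg.2.1.const_mul ((1+a)*α))).congr
      (Eventually.of_forall fun s => ?_)
    simp only [Pi.add_apply]; ring
  have hTi := hT.indicator (measurableSet_Iic (a := c))
  rw [← integral_indicator measurableSet_Iic]
  have e : (1 - α) * nR (gs 1 0) = (1-α) * nR (gs 1 0) - ∫ s, ((gs 1 0 s)^2 + 2 * (s * gs 1 0 s * deriv (gs 1 0) s)) := by
    rw [h0, sub_zero]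
  rw [e, nR, ← integral_const_mul, ← integral_sub (hg.2.1.const_mul _) hi, ← integral_add _ hTi, QS]
  · refine integral_congr_ae (Eventually.of_forall fun s => ?_)
    simp only [hd, pc, Vc, indicator, mem_Iic]
    by_cases h : c < s
    · simp only [h, not_le.2 h, if_true, if_false]; ring
    · simp only [h, not_lt.1 h, if_true, if_false]; ring
  · exact (hg.2.1.const_mul _).sub hi

lemma tail_tendsto (a m α : ℝ) : Tendsto (fun ξ : ℝ =>
    ∫ s in Iic (-ξ), ((1/m - 1) * (2 * s^2) + (1+a)*α) * (gs 1 0 s)^2) atTop (𝓝 0) := by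
  have hg := gs_mem one_pos 0
  have hT : Integrable (fun s => ((1/m - 1) * (2 * s^2) + (1+a)*α) * (gs 1 0 s)^2) := by
    refine ((hg.2.2.2.const_mul ((1/m-1)*2)).add (hg.2.1.const_mul ((1+a)*α))).congr
      (Eventually.of_forall fun s => ?_)
    simp only [Pi.add_apply]; ring
  have h := tendsto_setIntegral_of_antitone (s := fun ξ : ℝ => Iic (-ξ)) (μ := volume)
    (fun _ => measurableSet_Iic) (fun x y hxy => Iic_subset_Iic.2 (neg_le_neg hxy))
    ⟨0, hT.integrableOn⟩
  have he : (⋂ ξ : ℝ, Iic (-ξ)) = ∅ := by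
    ext x
    simp only [mem_iInter, mem_Iic, mem_empty_iff_false, iff_false, not_forall, not_le]
    exact ⟨-x+1, by linarith⟩
  rw [he, setIntegral_empty] at h
  exact h

/-- for `m ≤ 1`, `ξ ↦ μ₁(a,m,α;ξ)` is strictly decreasing, attains
no minimum, and its infimum is `1 - α`. -/
theorem mu1_strictAnti_of_m_le_one (a m α : ℝ) (ha : 0 < a) (hm0 : 0 < m) (hm : m ≤ 1)
    (hα : 0 < α) :
    StrictAnti (fun ξ => mu1 a m α ξ) ∧
    (∀ ξ : ℝ, ∃ ξ' : ℝ, mu1 a m α ξ' < mu1 a m α ξ) ∧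
    sInf (Set.range (fun ξ => mu1 a m α ξ)) = 1 - α := by
  have hs : StrictAnti (fun ξ => mu1 a m α ξ) := by
    intro ξ ξ' hξ
    by_contra hcon
    have hle : mu1 a m α ξ ≤ mu1 a m α ξ' := not_lt.1 hcon
    refine core ha hm0 hm hα (neg_lt_neg hξ) (mu_ge ha hm0 hm hα ξ')
      (fun v hv => mu_le ha hm0 hm hα ξ' hv) fun ε hε => ?_
    obtain ⟨v, hv, hn, hq⟩ := mu_approx a m α ξ ε hε
    exact ⟨v, hv, hn, by linarith⟩
  refine ⟨hs, fun ξ => ⟨ξ + 1, hs (by linarith)⟩, ?_⟩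
  refine csInf_eq_of_forall_ge_of_forall_gt_exists_lt (range_nonempty _) ?_ ?_
  · rintro _ ⟨ξ, rfl⟩
    exact mu_ge ha hm0 hm hα ξ
  · intro y hy
    have hn := nR_gs
    have hpos : 0 < (y - (1 - α)) * nR (gs 1 0) := mul_pos (by linarith) hn
    obtain ⟨ξ, hξ⟩ := ((tail_tendsto a m α).eventually (gt_mem_nhds hpos)).exists
    refine ⟨_, ⟨ξ, rfl⟩, ?_⟩
    have h1 := mu_le ha hm0 hm hα ξ (gs_mem one_pos 0)
    rw [QS_gauss] at h1
    refine lt_of_mul_lt_mul_right (a := nR (gs 1 0)) ?_ hn.le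
    simp only
    linarith
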